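/- The matrix I − P_11 − P_12·S is invertible, and the matrix R = (I − P_11 − P_12·S)^{-1}(I − Λ) is invertible, has all entries strictly positive, and is row-stochastic (R·1 = 1). -/

import Mathlib

/-!
Put `A = P₁₁ + P₁₂ S`. The proof treats `1 - P₂₂` and `1 - A` as M-matrices of the form `1 - Q`
with `Q` nonnegative and all row sums `< 1`. For such `Q` the minimum principle
`nonneg_of_mulVec_le` (`Q x ≤ x` implies `0 ≤ x`) shows that `1 - Q` is invertible with an
entrywise nonnegative inverse.

* For `Q = P₂₂` the row sums are `1 - φ_i`, so `S` is nonnegative, and `(1 - P₂₂) 1 = φ` gives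
  `S 1 = 1`.
* Hence `A` is nonnegative and `A 1 = λ`, so the same facts apply to `Q = A`, and
  `(1 - A) 1 = 1 - λ` gives `R 1 = 1`.
* A column `x` of `(1 - A)⁻¹` satisfies `x = A x + e_j`. It is positive at `j`, and positivity
  spreads along the edges of `A`, which include those of `W` since `P₁₁` is already positive
  wherever `W` is. Irreducibility of `W` makes the whole column positive.
-/

open Matrix BigOperators

/-- The diagonal part `W̃` of `W`. -/
noncomputable def diagPart {n : ℕ} (W : Matrix (Fin n) (Fin n) ℝ) :
    Matrix (Fin n) (Fin n) ℝ :=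
  Matrix.diagonal (fun i => W i i)

/-- The off-diagonal part `Ŵ` of `W`. -/
noncomputable def offDiagPart {n : ℕ} (W : Matrix (Fin n) (Fin n) ℝ) :
    Matrix (Fin n) (Fin n) ℝ :=
  W - diagPart W

/-- The block `P₁₁ = Λ(W̃ + ŴΦ)`. -/
noncomputable def P11 {n : ℕ} (W : Matrix (Fin n) (Fin n) ℝ)
    (lam phi : Fin n → ℝ) : Matrix (Fin n) (Fin n) ℝ :=
  Matrix.diagonal lam * (diagPart W + offDiagPart W * Matrix.diagonal phi)

/-- The block `P₁₂ = ΛŴ(I − Φ)M`. -/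
noncomputable def P12 {n : ℕ} (W M : Matrix (Fin n) (Fin n) ℝ)
    (lam phi : Fin n → ℝ) : Matrix (Fin n) (Fin n) ℝ :=
  Matrix.diagonal lam * offDiagPart W * (1 - Matrix.diagonal phi) * M

/-- The block `P₂₂ = (I − Φ)M`. -/
noncomputable def P22 {n : ℕ} (M : Matrix (Fin n) (Fin n) ℝ)
    (phi : Fin n → ℝ) : Matrix (Fin n) (Fin n) ℝ :=
  (1 - Matrix.diagonal phi) * M

/-- The matrix `S = (I − P₂₂)⁻¹ P₂₁`, where `P₂₁ = Φ`. -/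
noncomputable def Smat {n : ℕ} (M : Matrix (Fin n) (Fin n) ℝ)
    (phi : Fin n → ℝ) : Matrix (Fin n) (Fin n) ℝ :=
  (1 - P22 M phi)⁻¹ * Matrix.diagonal phi

/-- The matrix `R = (I − P₁₁ − P₁₂ S)⁻¹ (I − Λ)`. -/
noncomputable def Rmat {n : ℕ} (W M : Matrix (Fin n) (Fin n) ℝ)
    (lam phi : Fin n → ℝ) : Matrix (Fin n) (Fin n) ℝ :=
  (1 - P11 W lam phi - P12 W M lam phi * Smat M phi)⁻¹ *
    (1 - Matrix.diagonal lam)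

/-- Minimum principle: at an index minimising `x`, a negative value would be smaller than the
weighted sum `Q x`, because the weights add up to less than one. -/
lemma nonneg_of_mulVec_le {n : ℕ} {Q : Matrix (Fin n) (Fin n) ℝ} (hQ : ∀ i j, 0 ≤ Q i j)
    (hrow : ∀ i, (Q *ᵥ fun _ => (1 : ℝ)) i < 1) {x : Fin n → ℝ}
    (hx : ∀ i, (Q *ᵥ x) i ≤ x i) (i : Fin n) : 0 ≤ x i := by
  obtain ⟨m, -, hm⟩ := Finset.exists_min_image Finset.univ x ⟨i, Finset.mem_univ i⟩
  have hmi := hm i (Finset.mem_univ i)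
  by_contra! hneg
  have h1 : (Q *ᵥ fun _ => (1 : ℝ)) m * x m ≤ (Q *ᵥ x) m := by
    simp only [Matrix.mulVec, dotProduct, Finset.sum_mul, mul_one]
    exact Finset.sum_le_sum fun j _ =>
      mul_le_mul_of_nonneg_left (hm j (Finset.mem_univ j)) (hQ m j)
  nlinarith [hx m, hrow m]

lemma isUnit_one_sub {n : ℕ} {Q : Matrix (Fin n) (Fin n) ℝ} (hQ : ∀ i j, 0 ≤ Q i j)
    (hrow : ∀ i, (Q *ᵥ fun _ => (1 : ℝ)) i < 1) : IsUnit (1 - Q) := by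
  rw [← Matrix.mulVec_injective_iff_isUnit]
  intro x y hxy
  have hfix : Q *ᵥ (x - y) = x - y := by
    have h : (1 - Q) *ᵥ (x - y) = 0 := by
      rw [Matrix.mulVec_sub, sub_eq_zero]
      exact hxy
    rw [Matrix.sub_mulVec, Matrix.one_mulVec, sub_eq_zero] at h
    exact h.symm
  funext i
  -- The minimum principle applies to both `x - y` and `y - x`.
  have h1 := nonneg_of_mulVec_le hQ hrow (x := x - y) (fun i => by rw [hfix]) i
  have h2 := nonneg_of_mulVec_le hQ hrow (x := -(x - y))
    (fun i => by rw [Matrix.mulVec_neg, hfix]) i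
  simp only [Pi.neg_apply, Pi.sub_apply] at h1 h2
  linarith

/-- The resolvent identity `(1 - Q)⁻¹ = Q (1 - Q)⁻¹ + 1`, read column by column. -/
lemma inv_one_sub_apply {n : ℕ} {Q : Matrix (Fin n) (Fin n) ℝ} (hu : IsUnit (1 - Q))
    (i j : Fin n) :
    (1 - Q)⁻¹ i j = (Q *ᵥ fun k => (1 - Q)⁻¹ k j) i + (1 : Matrix (Fin n) (Fin n) ℝ) i j := by
  have h := Matrix.mul_nonsing_inv (1 - Q) ((Matrix.isUnit_iff_isUnit_det _).1 hu)
  have h' : (1 - Q)⁻¹ = Q * (1 - Q)⁻¹ + 1 := by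
    nth_rewrite 3 [← h]
    noncomm_ring
  exact congrFun (congrFun h' i) j

lemma one_apply_nonneg {n : ℕ} (i j : Fin n) : 0 ≤ (1 : Matrix (Fin n) (Fin n) ℝ) i j := by
  rw [Matrix.one_apply]
  split_ifs <;> norm_num

lemma inv_one_sub_nonneg {n : ℕ} {Q : Matrix (Fin n) (Fin n) ℝ} (hQ : ∀ i j, 0 ≤ Q i j)
    (hrow : ∀ i, (Q *ᵥ fun _ => (1 : ℝ)) i < 1) (i j : Fin n) : 0 ≤ (1 - Q)⁻¹ i j := by
  have hu := isUnit_one_sub hQ hrow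
  refine nonneg_of_mulVec_le hQ hrow (x := fun k => (1 - Q)⁻¹ k j) (fun k => ?_) i
  have h1 := inv_one_sub_apply hu k j
  have h2 := one_apply_nonneg k j
  linarith

/-- If the edges `a → b` given by `0 < Q b a` connect every vertex to every other one, then
`(1 - Q)⁻¹` is entrywise positive: each column is positive on the diagonal, and positivity
propagates along edges. -/
lemma inv_one_sub_pos {n : ℕ} {Q : Matrix (Fin n) (Fin n) ℝ} (hQ : ∀ i j, 0 ≤ Q i j)
    (hrow : ∀ i, (Q *ᵥ fun _ => (1 : ℝ)) i < 1)
    (hirr : ∀ i j, i ≠ j → Relation.TransGen (fun a b => 0 < Q b a) i j) (i j : Fin n) :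
    0 < (1 - Q)⁻¹ i j := by
  have hu := isUnit_one_sub hQ hrow
  have hnn := inv_one_sub_nonneg hQ hrow
  have hterm : ∀ k l, 0 ≤ Q k l * (1 - Q)⁻¹ l j := fun k l => mul_nonneg (hQ k l) (hnn l j)
  have hdiag : 0 < (1 - Q)⁻¹ j j := by
    have h : 0 ≤ (Q *ᵥ fun k => (1 - Q)⁻¹ k j) j := by
      simp only [Matrix.mulVec, dotProduct]
      exact Finset.sum_nonneg fun l _ => hterm j l
    rw [inv_one_sub_apply hu, Matrix.one_apply_eq]
    linarith
  have hstep : ∀ a b, 0 < Q b a → 0 < (1 - Q)⁻¹ a j → 0 < (1 - Q)⁻¹ b j := by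
    intro a b hab ha
    have h : Q b a * (1 - Q)⁻¹ a j ≤ (Q *ᵥ fun k => (1 - Q)⁻¹ k j) b :=
      Finset.single_le_sum (f := fun l => Q b l * (1 - Q)⁻¹ l j)
        (fun l _ => hterm b l) (Finset.mem_univ a)
    have := mul_pos hab ha
    have := one_apply_nonneg b j
    rw [inv_one_sub_apply hu]
    linarith
  rcases eq_or_ne j i with rfl | hji
  · exact hdiag
  · induction hirr j i hji with
    | single h => exact hstep _ _ h hdiag
    | tail _ h ih =>
      rename_i b c _
      rcases eq_or_ne j b with rfl | hjb
      · exact hstep _ _ h hdiag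
      · exact hstep _ _ h (ih hjb)

/-- A prescribed image of the all-ones vector under an invertible `B` can be inverted. -/
lemma inv_mul_diagonal_mulVec_one {n : ℕ} {B : Matrix (Fin n) (Fin n) ℝ} (hB : IsUnit B)
    {d : Fin n → ℝ} (h : (B *ᵥ fun _ => (1 : ℝ)) = d) :
    ((B⁻¹ * Matrix.diagonal d) *ᵥ fun _ => (1 : ℝ)) = fun _ => 1 := by
  have hd : (Matrix.diagonal d *ᵥ fun _ => (1 : ℝ)) = d := by
    funext i
    simp [Matrix.mulVec_diagonal]
  rw [← Matrix.mulVec_mulVec, hd, ← h, Matrix.mulVec_mulVec,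
    Matrix.nonsing_inv_mul B ((Matrix.isUnit_iff_isUnit_det _).1 hB), Matrix.one_mulVec]

lemma offDiagPart_nonneg {n : ℕ} {W : Matrix (Fin n) (Fin n) ℝ} (hW : ∀ i j, 0 ≤ W i j)
    (i j : Fin n) : 0 ≤ offDiagPart W i j := by
  rcases eq_or_ne i j with rfl | h
  · simp [offDiagPart, diagPart]
  · simp [offDiagPart, diagPart, h, hW]

lemma mul_apply_nonneg {n : ℕ} {A B : Matrix (Fin n) (Fin n) ℝ} (hA : ∀ i j, 0 ≤ A i j)
    (hB : ∀ i j, 0 ≤ B i j) (i j : Fin n) : 0 ≤ (A * B) i j := by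
  rw [Matrix.mul_apply]
  exact Finset.sum_nonneg fun k _ => mul_nonneg (hA i k) (hB k j)

lemma one_sub_diagonal {n : ℕ} (d : Fin n → ℝ) :
    (1 : Matrix (Fin n) (Fin n) ℝ) - Matrix.diagonal d = Matrix.diagonal fun i => 1 - d i := by
  rw [← Matrix.diagonal_one, Matrix.diagonal_sub]

lemma diagonal_nonneg {n : ℕ} {d : Fin n → ℝ} (hd : ∀ i, 0 ≤ d i) (i j : Fin n) :
    0 ≤ Matrix.diagonal d i j := by
  rw [Matrix.diagonal_apply]
  split_ifs
  exacts [hd i, le_rfl]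

lemma P11_apply {n : ℕ} (W : Matrix (Fin n) (Fin n) ℝ) (lam phi : Fin n → ℝ) (i j : Fin n) :
    P11 W lam phi i j = lam i * (W i j * if i = j then 1 else phi j) := by
  rcases eq_or_ne i j with rfl | h
  · simp [P11, offDiagPart, diagPart, Matrix.diagonal_mul, Matrix.mul_diagonal]
  · simp [P11, offDiagPart, diagPart, Matrix.diagonal_mul, Matrix.mul_diagonal, h]

/-- The matrix `I − P₁₁ − P₁₂·S` is invertible, and
`R = (I − P₁₁ − P₁₂·S)⁻¹(I − Λ)` is invertible, entrywise strictly positive,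
and row-stochastic (`R·1 = 1`). -/
theorem stmt_4 {n : ℕ} (hn : 2 ≤ n) (W M : Matrix (Fin n) (Fin n) ℝ)
    (hWnn : ∀ i j, 0 ≤ W i j) (hWrow : ∀ i, ∑ j, W i j = 1)
    (hWirr : ∀ i j, i ≠ j → Relation.TransGen (fun a b => 0 < W b a) i j)
    (hWprim : ∃ k : ℕ, 0 < k ∧ ∀ i j, 0 < (W ^ k) i j)
    (hMnn : ∀ i j, 0 ≤ M i j) (hMrow : ∀ i, ∑ j, M i j = 1)
    (hMW : ∀ i j, 0 < M i j ↔ 0 < W i j)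
    (lam phi : Fin n → ℝ)
    (hlam : ∀ i, lam i ∈ Set.Ioo (0 : ℝ) 1)
    (hphi : ∀ i, phi i ∈ Set.Ioo (0 : ℝ) 1) :
    IsUnit (1 - P11 W lam phi - P12 W M lam phi * Smat M phi) ∧
    IsUnit (Rmat W M lam phi) ∧
    (∀ i j, 0 < Rmat W M lam phi i j) ∧
    (Rmat W M lam phi *ᵥ (fun _ => (1 : ℝ)) = fun _ => (1 : ℝ)) := by
  have hMone : (M *ᵥ fun _ => (1 : ℝ)) = fun _ => 1 := by
    funext i
    simpa [Matrix.mulVec, dotProduct] using hMrow i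
  have hWone : (W *ᵥ fun _ => (1 : ℝ)) = fun _ => 1 := by
    funext i
    simpa [Matrix.mulVec, dotProduct] using hWrow i
  have hcphi : ∀ i j, 0 ≤ (1 - Matrix.diagonal phi : Matrix (Fin n) (Fin n) ℝ) i j := by
    rw [one_sub_diagonal]
    exact diagonal_nonneg fun i => sub_nonneg.2 (hphi i).2.le
  have hP22 : ∀ i j, 0 ≤ P22 M phi i j := mul_apply_nonneg hcphi hMnn
  have hP22one : (P22 M phi *ᵥ fun _ => (1 : ℝ)) = fun i => 1 - phi i := by
    rw [P22, ← Matrix.mulVec_mulVec, hMone, one_sub_diagonal]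
    funext i
    simp [Matrix.mulVec_diagonal]
  have hP22row : ∀ i, (P22 M phi *ᵥ fun _ => (1 : ℝ)) i < 1 := fun i => by
    rw [hP22one]
    linarith [(hphi i).1]
  have hSone : (Smat M phi *ᵥ fun _ => (1 : ℝ)) = fun _ => 1 := by
    refine inv_mul_diagonal_mulVec_one (isUnit_one_sub hP22 hP22row) ?_
    rw [Matrix.sub_mulVec, hP22one, Matrix.one_mulVec]
    funext i
    simp
  have hS : ∀ i j, 0 ≤ Smat M phi i j :=
    mul_apply_nonneg (inv_one_sub_nonneg hP22 hP22row) (diagonal_nonneg fun i => (hphi i).1.le)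
  have hP12S : ∀ i j, 0 ≤ (P12 W M lam phi * Smat M phi) i j :=
    mul_apply_nonneg (mul_apply_nonneg (mul_apply_nonneg
      (mul_apply_nonneg (diagonal_nonneg fun i => (hlam i).1.le) (offDiagPart_nonneg hWnn))
      hcphi) hMnn) hS
  have hP11 : ∀ i j, 0 ≤ P11 W lam phi i j := fun i j => by
    rw [P11_apply]
    refine mul_nonneg (hlam i).1.le (mul_nonneg (hWnn i j) ?_)
    split_ifs
    exacts [zero_le_one, (hphi j).1.le]
  have hP11pos : ∀ i j, 0 < W i j → 0 < P11 W lam phi i j := fun i j h => by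
    rw [P11_apply]
    refine mul_pos (hlam i).1 (mul_pos h ?_)
    split_ifs
    exacts [zero_lt_one, (hphi j).1]
  rw [Rmat, sub_sub]
  set A := P11 W lam phi + P12 W M lam phi * Smat M phi with hA
  have hAnn : ∀ i j, 0 ≤ A i j := fun i j => add_nonneg (hP11 i j) (hP12S i j)
  have hAone : (A *ᵥ fun _ => (1 : ℝ)) = lam := by
    -- Since `S 1 = M 1 = 1`, the factors `Φ` and `1 - Φ` recombine to `Λ (W̃ + Ŵ) 1 = Λ W 1`.
    have hsplit : P11 W lam phi + Matrix.diagonal lam * offDiagPart W * (1 - Matrix.diagonal phi)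
        = Matrix.diagonal lam * W := by
      rw [P11, offDiagPart]
      noncomm_ring
    rw [hA, Matrix.add_mulVec, ← Matrix.mulVec_mulVec, hSone, P12, ← Matrix.mulVec_mulVec, hMone,
      ← Matrix.add_mulVec, hsplit, ← Matrix.mulVec_mulVec, hWone]
    funext i
    simp [Matrix.mulVec_diagonal]
  have hArow : ∀ i, (A *ᵥ fun _ => (1 : ℝ)) i < 1 := fun i => by
    rw [hAone]
    exact (hlam i).2
  have hAirr : ∀ i j, i ≠ j → Relation.TransGen (fun a b => 0 < A b a) i j := fun i j hij =>
    Relation.TransGen.mono (fun a b h => add_pos_of_pos_of_nonneg (hP11pos b a h) (hP12S b a))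
      _ _ (hWirr i j hij)
  have hu : IsUnit (1 - A) := isUnit_one_sub hAnn hArow
  rw [one_sub_diagonal]
  refine ⟨hu, ?_, fun i j => ?_, ?_⟩
  · refine IsUnit.mul ((Matrix.isUnit_nonsing_inv_iff).2 hu) ?_
    rw [Matrix.isUnit_diagonal, Pi.isUnit_iff]
    exact fun i => (sub_pos.2 (hlam i).2).ne'.isUnit
  · rw [Matrix.mul_diagonal]
    exact mul_pos (inv_one_sub_pos hAnn hArow hAirr i j) (sub_pos.2 (hlam j).2)
  · refine inv_mul_diagonal_mulVec_one hu ?_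
    rw [Matrix.sub_mulVec, hAone, Matrix.one_mulVec]
    rfl
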